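/- Let (X,d) be a metric space, f : X → X a map, x ∈ X, ℓ ∈ ℕ, n ≥ 2 an integer and ε > 0. Then C_ℓ(x,n,ε) = ((n−1)/n)·[RR_ℓ(x,n,ε) − (ℓ−1)·P≥_ℓ(x,n,ε)] + δ for some real number δ with 1/n ≤ δ < 2ℓ/n. -/

import Mathlib

open Filter Topology MeasureTheory

namespace RQA

/-- The standard metric on symbolic sequences over an alphabet `α`:
`ρ(x,y) = 2^{-min{i : x i ≠ y i}}` for `x ≠ y` and `ρ(x,x) = 0`. -/
noncomputable def seqDist {α : Type*} (x y : ℕ → α) : ℝ :=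
  haveI := Classical.propDecidable (x = y)
  if x = y then 0 else (2 : ℝ) ^ (-((sInf {i : ℕ | x i ≠ y i} : ℕ) : ℤ))

/-- The (one-sided) shift on sequences. -/
def shift {α : Type*} (x : ℕ → α) : ℕ → α := fun i => x (i + 1)

/-- The embedded sequence `x^{(m)}`, a sequence over the alphabet `α^m`. -/
def embedSeq {α : Type*} (m : ℕ) (x : ℕ → α) : ℕ → (Fin m → α) :=
  fun j t => x (j + (t : ℕ))

section RQAdefs

variable {X : Type*} (d : X → X → ℝ) (f : X → X) (x : X)

/-- The entry of the recurrence plot at `(i,j)` equals `1`. -/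
def RPone (ε : ℝ) (i j : ℕ) : Prop := d (f^[i] x) (f^[j] x) ≤ ε

/-- `(i, j, l)` is a diagonal line in the recurrence plot `RP(x, n, ε)`. -/
def IsLine (n : ℕ) (ε : ℝ) (i j l : ℕ) : Prop :=
  1 ≤ l ∧ i + l ≤ n ∧ j + l ≤ n ∧ i ≠ j ∧
  (∀ h, h < l → RPone d f x ε (i + h) (j + h)) ∧
  (0 < i → 0 < j → ¬ RPone d f x ε (i - 1) (j - 1)) ∧
  (max i j + l < n → ¬ RPone d f x ε (i + l) (j + l))

/-- `N_l(x, n, ε)`: the number of diagonal lines of length exactly `l`. -/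
noncomputable def Nlines (n : ℕ) (ε : ℝ) (l : ℕ) : ℕ :=
  Set.ncard {p : ℕ × ℕ | IsLine d f x n ε p.1 p.2 l}

/-- `P_l(x, n, ε) = N_l/(n² − n)`. -/
noncomputable def Pline (n : ℕ) (ε : ℝ) (l : ℕ) : ℝ :=
  (Nlines d f x n ε l : ℝ) / ((n : ℝ) ^ 2 - (n : ℝ))

/-- `P≥_ℓ(x, n, ε) = Σ_{l ≥ ℓ} P_l`. -/
noncomputable def PlineGe (n : ℕ) (ε : ℝ) (ℓ : ℕ) : ℝ :=
  ∑' k : ℕ, Pline d f x n ε (ℓ + k)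

/-- The recurrence rate `RR_ℓ(x, n, ε) = Σ_{l ≥ ℓ} l · P_l`. -/
noncomputable def RRate (n : ℕ) (ε : ℝ) (ℓ : ℕ) : ℝ :=
  ∑' k : ℕ, ((ℓ + k : ℕ) : ℝ) * Pline d f x n ε (ℓ + k)

/-- The determinism `DET_ℓ(x, n, ε) = RR_ℓ/RR_1`. -/
noncomputable def DETrm (n : ℕ) (ε : ℝ) (ℓ : ℕ) : ℝ :=
  RRate d f x n ε ℓ / RRate d f x n ε 1

/-- The average line length `L_ℓ(x, n, ε) = RR_ℓ/P≥_ℓ`. -/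
noncomputable def LAvg (n : ℕ) (ε : ℝ) (ℓ : ℕ) : ℝ :=
  RRate d f x n ε ℓ / PlineGe d f x n ε ℓ

/-- The entropy of line lengths
`ENT_ℓ(x, n, ε) = log P≥_ℓ − (1/P≥_ℓ)·Σ_{l≥ℓ} P_l · log P_l` (with `0·log 0 = 0`). -/
noncomputable def ENTln (n : ℕ) (ε : ℝ) (ℓ : ℕ) : ℝ :=
  Real.log (PlineGe d f x n ε ℓ) -
    (PlineGe d f x n ε ℓ)⁻¹ *
      ∑' k : ℕ, Pline d f x n ε (ℓ + k) * Real.log (Pline d f x n ε (ℓ + k))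

/-- The correlation sum
`C_ℓ(x, n, ε) = n^{-2}·#{(i,j) ∈ [0,n)² : d_ℓ(f^i x, f^j x) ≤ ε}`,
where `d_ℓ` is the Bowen metric. -/
noncomputable def corrSum (ℓ n : ℕ) (ε : ℝ) : ℝ :=
  (Set.ncard {p : ℕ × ℕ | p.1 < n ∧ p.2 < n ∧
      ∀ k, k < ℓ → d (f^[p.1 + k] x) (f^[p.2 + k] x) ≤ ε} : ℝ) / (n : ℝ) ^ 2

end RQAdefs

/-- The extension of a substitution to a morphism of the free monoid of finite words. -/
def substWord (ζ : Bool → List Bool) : List Bool → List Bool :=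
  fun w => w.foldr (fun a r => ζ a ++ r) []

/-- `ζ` is a (binary) substitution of constant length `q ≥ 2`. -/
def IsConstLenSubst (ζ : Bool → List Bool) (q : ℕ) : Prop :=
  2 ≤ q ∧ ∀ a : Bool, (ζ a).length = q

/-- The language `L_ζ`: subwords of the words `ζ^k(a)`, `a ∈ A`, `k ≥ 1`. -/
def substLang (ζ : Bool → List Bool) : Set (List Bool) :=
  {w | ∃ a : Bool, ∃ k : ℕ, 1 ≤ k ∧ w <:+: (substWord ζ)^[k] [a]}

/-- The substitution subshift `X_ζ`. -/
def SubstShift (ζ : Bool → List Bool) : Set (ℕ → Bool) :=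
  {y | ∀ n : ℕ, (List.ofFn fun t : Fin n => y (t : ℕ)) ∈ substLang ζ}

/-- `ζ` is primitive. -/
def IsPrimitive (ζ : Bool → List Bool) : Prop :=
  ∃ k : ℕ, 1 ≤ k ∧ ∀ a b : Bool, b ∈ (substWord ζ)^[k] [a]

/-- `ζ` is aperiodic: `X_ζ` contains a non-periodic sequence. -/
def IsAperiodic (ζ : Bool → List Bool) : Prop :=
  ∃ y ∈ SubstShift ζ, ∀ p : ℕ, 1 ≤ p → ∃ i : ℕ, y (i + p) ≠ y i

/-- The action of a constant length-`q` substitution on infinite sequences. -/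
def substSeq (ζ : Bool → List Bool) (q : ℕ) (x : ℕ → Bool) : ℕ → Bool :=
  fun i => (ζ (x (i / q))).getD (i % q) false

/-- `(i, j, l)` is a line in the infinite symbolic recurrence plot `RP(x, ∞, ε₀)`. -/
def IsInfLine (x : ℕ → Bool) (i j l : ℕ) : Prop :=
  1 ≤ l ∧ i ≠ j ∧ (∀ h, h < l → x (i + h) = x (j + h)) ∧
  (0 < i → 0 < j → x (i - 1) ≠ x (j - 1)) ∧ x (i + l) ≠ x (j + l)

/-- `K_l`: the set of starting points `(i,j)`, `i,j ≥ 1`, of inner lines of length `l`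
in the infinite symbolic recurrence plot. -/
def Kset (x : ℕ → Bool) (l : ℕ) : Set (ℕ × ℕ) :=
  {p | 1 ≤ p.1 ∧ 1 ≤ p.2 ∧ IsInfLine x p.1 p.2 l}

/-- `#(M ∩ [0,n)²)/n²`. -/
noncomputable def densCount (M : Set (ℕ × ℕ)) (n : ℕ) : ℝ :=
  (Set.ncard (M ∩ {p : ℕ × ℕ | p.1 < n ∧ p.2 < n}) : ℝ) / (n : ℝ) ^ 2

/-- `M ⊆ ℕ²` has asymptotic density `a`. -/
def HasDens (M : Set (ℕ × ℕ)) (a : ℝ) : Prop :=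
  Tendsto (densCount M) atTop (𝓝 a)

/-- `δ_l(n) = #(K_l ∩ [1,n)²)/(n² − n)`. -/
noncomputable def deltaK (x : ℕ → Bool) (l n : ℕ) : ℝ :=
  (Set.ncard (Kset x l ∩ {p : ℕ × ℕ | p.1 < n ∧ p.2 < n}) : ℝ) / ((n : ℝ) ^ 2 - (n : ℝ))

/-- `M` is a minimal subset of the subshift `Y`. -/
def IsMinimalSubset (Y M : Set (ℕ → Bool)) : Prop :=
  M ⊆ Y ∧ M.Nonempty ∧ IsClosed M ∧ (∀ z ∈ M, shift z ∈ M) ∧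
  ∀ M' : Set (ℕ → Bool), M' ⊆ M → M'.Nonempty → IsClosed M' →
    (∀ z ∈ M', shift z ∈ M') → M' = M

end RQA

open RQA

/-!
Write `S l` for the set of starting points of off-diagonal segments of `l` ones in the plot, `T l`
for those in `S l` that cannot be prolonged backwards, and `L l` for those in `T l` that cannot be
prolonged forwards either, i.e. the lines of length `l`. Prolonging backwards and forwards gives
`#S l = #S (l + 1) + #T l` and `#T l = #T (l + 1) + #L l`; hence
`#S ℓ = ∑ l ≥ ℓ, (l - ℓ + 1) * #L l`, which is `(n² - n) * (RR_ℓ - (ℓ - 1) * P≥_ℓ)`. The correlation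
sum counts the pairs in `S ℓ`, the `n` pairs on the main diagonal, and at most `2 * (ℓ - 1) * n`
pairs whose segment leaves the `n × n` square.
-/

namespace RQA

theorem eq_add_sum_range_succ_nsmul {M : Type*} [AddCommMonoid M] {s t a : ℕ → M}
    (hs : ∀ l, s l = s (l + 1) + t l) (ht : ∀ l, t l = t (l + 1) + a l) (l m : ℕ) :
    s l = s (l + m) + m • t (l + m) + ∑ k ∈ Finset.range m, (k + 1) • a (l + k) := by
  induction m with
  | zero => simp
  | succ m ih =>
    calc s l
        = s (l + m) + m • t (l + m) + ∑ k ∈ Finset.range m, (k + 1) • a (l + k) := ih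
      _ = s (l + m + 1) + (m + 1) • t (l + m) + ∑ k ∈ Finset.range m, (k + 1) • a (l + k) := by
          rw [hs (l + m), succ_nsmul', add_assoc (s _)]
      _ = s (l + (m + 1)) + (m + 1) • t (l + (m + 1)) +
            ∑ k ∈ Finset.range (m + 1), (k + 1) • a (l + k) := by
          rw [ht (l + m), nsmul_add, Finset.sum_range_succ, add_assoc l m 1]
          abel

section Plot

variable (R : ℕ → ℕ → Prop) (n l : ℕ)

/-- The starting points of the segments of `l` consecutive ones, parallel to and off the main
diagonal, inside the `n × n` corner of the plot of `R`. Segments need not be maximal. -/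
def segments : Set (ℕ × ℕ) :=
  {p | p.1 + l ≤ n ∧ p.2 + l ≤ n ∧ p.1 ≠ p.2 ∧ ∀ h < l, R (p.1 + h) (p.2 + h)}

/-- The segments that cannot be prolonged backwards. -/
def leftMaximalSegments : Set (ℕ × ℕ) :=
  {p ∈ segments R n l | ¬(0 < p.1 ∧ 0 < p.2 ∧ R (p.1 - 1) (p.2 - 1))}

/-- The segments that can be prolonged neither backwards nor forwards: for `1 ≤ l` these are the
diagonal lines of length `l`. -/
def maximalSegments : Set (ℕ × ℕ) :=
  {p ∈ leftMaximalSegments R n l | ¬(max p.1 p.2 + l < n ∧ R (p.1 + l) (p.2 + l))}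

/-- The pairs counted by the correlation sum: both times lie below `n`, but the segment of `l` ones
starting there may leave the `n × n` corner of the plot. -/
def recurrentPairs : Set (ℕ × ℕ) :=
  {p | p.1 < n ∧ p.2 < n ∧ ∀ k < l, R (p.1 + k) (p.2 + k)}

theorem finite_segments : (segments R n l).Finite := by
  refine ((Set.finite_Iic n).prod (Set.finite_Iic n)).subset ?_
  rintro p ⟨hi, hj, -⟩
  exact ⟨by grind, by grind⟩

theorem finite_recurrentPairs : (recurrentPairs R n l).Finite :=
  ((Set.finite_Iio n).prod (Set.finite_Iio n)).subset fun _ hp => ⟨hp.1, hp.2.1⟩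

theorem finite_leftMaximalSegments : (leftMaximalSegments R n l).Finite :=
  (finite_segments R n l).subset (Set.sep_subset _ _)

variable {n l} in
theorem segments_eq_empty_of_lt (h : n < l) : segments R n l = ∅ := by
  refine Set.eq_empty_of_forall_notMem ?_
  rintro p ⟨hi, -⟩
  omega

theorem image_succ_segments_succ :
    Prod.map Nat.succ Nat.succ '' segments R n (l + 1) =
      {p ∈ segments R n l | 0 < p.1 ∧ 0 < p.2 ∧ R (p.1 - 1) (p.2 - 1)} := by
  ext ⟨i, j⟩
  constructor
  · rintro ⟨⟨i, j⟩, ⟨hi, hj, hne, hR⟩, ⟨⟩⟩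
    refine ⟨⟨by grind, by grind, by grind, fun h hh => ?_⟩, i.succ_pos, j.succ_pos,
      hR 0 l.succ_pos⟩
    simpa only [Nat.succ_add_eq_add_succ] using hR (h + 1) (by omega)
  · rintro ⟨⟨hi, hj, hne, hR⟩, hi0, hj0, hprev⟩
    obtain ⟨i, rfl⟩ := Nat.exists_eq_add_one.mpr hi0
    obtain ⟨j, rfl⟩ := Nat.exists_eq_add_one.mpr hj0
    refine ⟨(i, j), ⟨by grind, by grind, by grind, ?_⟩, rfl⟩
    rintro (_ | h) hh
    · exact hprev
    · simpa only [Nat.succ_add_eq_add_succ] using hR h (by omega)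

theorem leftMaximalSegments_succ :
    leftMaximalSegments R n (l + 1) =
      {p ∈ leftMaximalSegments R n l | max p.1 p.2 + l < n ∧ R (p.1 + l) (p.2 + l)} := by
  ext ⟨i, j⟩
  simp only [leftMaximalSegments, segments, Set.mem_ofPred_eq, Nat.forall_lt_succ_right]
  grind

theorem ncard_segments_eq_add :
    (segments R n l).ncard = (segments R n (l + 1)).ncard + (leftMaximalSegments R n l).ncard := by
  have hinj : Function.Injective (Prod.map Nat.succ Nat.succ) :=
    Nat.succ_injective.prodMap Nat.succ_injective
  rw [← Set.ncard_image_of_injective (segments R n (l + 1)) hinj, image_succ_segments_succ]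
  exact (Set.ncard_inter_add_ncard_sdiff_eq_ncard _ _ (finite_segments R n l)).symm

theorem ncard_leftMaximalSegments_eq_add :
    (leftMaximalSegments R n l).ncard =
      (leftMaximalSegments R n (l + 1)).ncard + (maximalSegments R n l).ncard := by
  rw [leftMaximalSegments_succ]
  exact (Set.ncard_inter_add_ncard_sdiff_eq_ncard _ _ (finite_leftMaximalSegments R n l)).symm

theorem ncard_segments_eq_sum :
    (segments R n l).ncard =
      ∑ k ∈ Finset.range (n + 1), (k + 1) * (maximalSegments R n (l + k)).ncard := by
  have hempty : segments R n (l + (n + 1)) = ∅ := segments_eq_empty_of_lt R (by omega)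
  rw [eq_add_sum_range_succ_nsmul (ncard_segments_eq_add R n)
    (ncard_leftMaximalSegments_eq_add R n) l (n + 1)]
  simp [leftMaximalSegments, hempty]

variable {R n l}

theorem segments_subset_recurrentPairs (hl : 1 ≤ l) : segments R n l ⊆ recurrentPairs R n l :=
  fun _ ⟨hi, hj, _, hR⟩ => ⟨by omega, by omega, hR⟩

theorem le_ncard_recurrentPairs_sdiff_segments (hR : ∀ i, R i i) :
    n ≤ (recurrentPairs R n l \ segments R n l).ncard := by
  have hsub : ((Finset.range n).diag : Set (ℕ × ℕ)) ⊆ recurrentPairs R n l \ segments R n l := by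
    rintro ⟨i, j⟩ hij
    obtain ⟨hi, rfl⟩ : i < n ∧ i = j := by simpa using hij
    exact ⟨⟨hi, hi, fun k _ => hR (i + k)⟩, fun h => h.2.2.1 rfl⟩
  simpa only [Set.ncard_coe_finset, Finset.diag_card, Finset.card_range] using
    Set.ncard_le_ncard hsub (finite_recurrentPairs R n l).sdiff

theorem ncard_recurrentPairs_sdiff_segments_add_le (hl : 1 ≤ l) :
    (recurrentPairs R n l \ segments R n l).ncard + n ≤ 2 * l * n := by
  obtain ⟨m, rfl⟩ := Nat.exists_eq_add_of_le' hl
  let late : Finset ℕ := Finset.Ico (n - m) n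
  have hlate : late.card ≤ m := by grind [Nat.card_Ico]
  have hsub : recurrentPairs R n (m + 1) \ segments R n (m + 1) ⊆
      ((Finset.range n).diag ∪ (late ×ˢ Finset.range n ∪ Finset.range n ×ˢ late) :
        Finset (ℕ × ℕ)) := by
    rintro ⟨i, j⟩ ⟨⟨hi, hj, hR⟩, hnot⟩
    have : i = j ∨ n < i + (m + 1) ∨ n < j + (m + 1) := by
      by_contra! h
      exact hnot ⟨h.2.1, h.2.2, h.1, hR⟩
    simp only [late, Finset.mem_coe, Finset.mem_union, Finset.mem_diag, Finset.mem_product,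
      Finset.mem_range, Finset.mem_Ico]
    grind
  have hcard : (recurrentPairs R n (m + 1) \ segments R n (m + 1)).ncard ≤ n + (m * n + n * m) :=
    calc _ ≤ _ := Set.ncard_le_ncard hsub (Finset.finite_toSet _)
      _ ≤ (Finset.range n).diag.card +
            ((late ×ˢ Finset.range n).card + (Finset.range n ×ˢ late).card) := by
          rw [Set.ncard_coe_finset]
          exact (Finset.card_union_le _ _).trans (by gcongr; exact Finset.card_union_le _ _)
      _ ≤ n + (m * n + n * m) := by
          simp only [Finset.diag_card, Finset.card_product, Finset.card_range]
          gcongr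
  linarith

end Plot

section Quantifiers

variable {X : Type*} (d : X → X → ℝ) (f : X → X) (x : X) (ε : ℝ) {n l ℓ : ℕ}

theorem Nlines_eq_ncard_maximalSegments (hl : 1 ≤ l) :
    Nlines d f x n ε l = (maximalSegments (RPone d f x ε) n l).ncard := by
  unfold Nlines
  congr 1
  ext ⟨i, j⟩
  simp only [IsLine, maximalSegments, leftMaximalSegments, segments, Set.mem_ofPred_eq]
  tauto

theorem Pline_eq_zero_of_lt (h : n < l) : Pline d f x n ε l = 0 := by
  have hempty : {p : ℕ × ℕ | IsLine d f x n ε p.1 p.2 l} = ∅ :=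
    Set.eq_empty_of_forall_notMem fun p ⟨_, hp, _⟩ => by omega
  rw [Pline, Nlines, hempty, Set.ncard_empty, Nat.cast_zero, zero_div]

theorem RRate_sub_mul_PlineGe (hℓ : 1 ≤ ℓ) :
    RRate d f x n ε ℓ - ((ℓ : ℝ) - 1) * PlineGe d f x n ε ℓ =
      (segments (RPone d f x ε) n ℓ).ncard / ((n : ℝ) ^ 2 - n) := by
  have hzero : ∀ k ∉ Finset.range (n + 1), Pline d f x n ε (ℓ + k) = 0 := fun k hk =>
    Pline_eq_zero_of_lt d f x ε (by grind)
  calc RRate d f x n ε ℓ - ((ℓ : ℝ) - 1) * PlineGe d f x n ε ℓ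
      = ∑ k ∈ Finset.range (n + 1), ((k : ℝ) + 1) * Pline d f x n ε (ℓ + k) := by
        rw [RRate, PlineGe, tsum_eq_sum hzero,
          tsum_eq_sum fun k hk => mul_eq_zero_of_right _ (hzero k hk), Finset.mul_sum,
          ← Finset.sum_sub_distrib]
        refine Finset.sum_congr rfl fun k _ => ?_
        push_cast
        ring
    _ = (segments (RPone d f x ε) n ℓ).ncard / ((n : ℝ) ^ 2 - n) := by
        rw [ncard_segments_eq_sum, Nat.cast_sum, Finset.sum_div]
        refine Finset.sum_congr rfl fun k _ => ?_
        rw [Pline, Nlines_eq_ncard_maximalSegments d f x ε (by omega)]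
        push_cast
        ring

theorem corrSum_eq_ncard_segments_div_add (hℓ : 1 ≤ ℓ) :
    corrSum d f x ℓ n ε =
      (segments (RPone d f x ε) n ℓ).ncard / (n : ℝ) ^ 2 +
        (recurrentPairs (RPone d f x ε) n ℓ \ segments (RPone d f x ε) n ℓ).ncard /
          (n : ℝ) ^ 2 := by
  rw [← add_div, ← Nat.cast_add, add_comm, Set.ncard_sdiff_add_ncard_of_subset
    (segments_subset_recurrentPairs hℓ) (finite_recurrentPairs _ _ _)]
  rfl

end Quantifiers

end RQA

theorem corrSum_eq_RRate_general
    {X : Type*} (d : X → X → ℝ) (f : X → X) (x : X) (ℓ n : ℕ) (hℓ : 1 ≤ ℓ) (hn : 2 ≤ n) (ε : ℝ)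
    (hdiag : ∀ i, RPone d f x ε i i) :
    ∃ δ : ℝ, 1 / (n : ℝ) ≤ δ ∧ δ < 2 * (ℓ : ℝ) / (n : ℝ) ∧
      corrSum d f x ℓ n ε =
        (((n : ℝ) - 1) / (n : ℝ)) *
          (RRate d f x n ε ℓ - ((ℓ : ℝ) - 1) * PlineGe d f x n ε ℓ) + δ := by
  have hn' : (2 : ℝ) ≤ n := mod_cast hn
  let rest := recurrentPairs (RPone d f x ε) n ℓ \ segments (RPone d f x ε) n ℓ
  have hlower : (n : ℝ) ≤ rest.ncard := mod_cast le_ncard_recurrentPairs_sdiff_segments hdiag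
  have hupper : (rest.ncard : ℝ) + n ≤ 2 * ℓ * n :=
    mod_cast ncard_recurrentPairs_sdiff_segments_add_le hℓ
  refine ⟨rest.ncard / (n : ℝ) ^ 2, ?_, ?_, ?_⟩
  · rw [div_le_div_iff₀ (by positivity) (by positivity)]
    nlinarith
  · rw [div_lt_div_iff₀ (by positivity) (by positivity)]
    nlinarith
  · have hn1 : (n : ℝ) - 1 ≠ 0 := by linarith
    rw [corrSum_eq_ncard_segments_div_add d f x ε hℓ, RRate_sub_mul_PlineGe d f x ε hℓ,
      show (n : ℝ) ^ 2 - n = n * (n - 1) by ring]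
    congr 1
    field_simp

/-- Correlation sum via recurrence rate:
C_ℓ(x,n,ε) = ((n−1)/n)·[RR_ℓ − (ℓ−1)·P≥_ℓ] + δ with 1/n ≤ δ < 2ℓ/n. -/
theorem corrSum_eq_RRate
    {X : Type*} [MetricSpace X] (f : X → X) (x : X)
    (ℓ n : ℕ) (hℓ : 1 ≤ ℓ) (hn : 2 ≤ n) (ε : ℝ) (hε : 0 < ε) :
    ∃ δ : ℝ, 1 / (n : ℝ) ≤ δ ∧ δ < 2 * (ℓ : ℝ) / (n : ℝ) ∧
      corrSum dist f x ℓ n ε =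
        (((n : ℝ) - 1) / (n : ℝ)) *
          (RRate dist f x n ε ℓ - ((ℓ : ℝ) - 1) * PlineGe dist f x n ε ℓ) + δ := by
  exact corrSum_eq_RRate_general dist f x ℓ n hℓ hn ε fun i => (dist_self (f^[i] x)).trans_le hε.le
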